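/- arXiv:1407.3313 — 2 statements merged into one kernel-verified Lean document; each statement's English description precedes it below -/
import Mathlib

section
/- Let Ω ⊂ ℝ^n be a bounded domain with C¹ boundary, s ∈ (0,1), and u ∈ C(ℝ^n). Then the renormalized nonlocal normal derivative Ñ_s u vanishes at the boundary: lim_{x → ∂Ω, x ∈ ℝ^n\closure(Ω)} Ñ_s u(x) = 0, i.e. for every p ∈ ∂Ω and every sequence x_k ∈ ℝ^n\closure(Ω) with x_k → p, one has Ñ_s u(x_k) → 0. -/
/-!
After cancelling `c_{n,s}`, `Ñ_s u(x)` is the average of `u x - u y` over `Ω` with weight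
`|x - y|^{-n-2s}`. Near a boundary point `p` a `C¹` domain contains a cone with vertex `p`
(`exists_interior_balls`), so the total weight tends to infinity as `x → p`
(`tendsto_weight_atTop`): each scale `t > |x - p|` contributes a multiple of `t ^ (-2s)`.
The part of `Ω` away from `p` carries a bounded weight and `u` is bounded on `Ω`, while near `p`
the difference `u x - u y` is small by continuity; hence the numerator is at most `ε` times the
total weight plus a constant (`exists_numerator_bound`), and dividing gives the limit `0`.
-/


open MeasureTheory Filter Set Bornology
open scoped Topology ENNReal NNReal Pointwise symmDiff

noncomputable section

/-- `ℝ^n` as a Euclidean space. -/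
abbrev En (n : ℕ) := EuclideanSpace ℝ (Fin n)

/-- The normalization constant `c_{n,s}` of the fractional Laplacian. -/
def cns (n : ℕ) (s : ℝ) : ℝ :=
  4 ^ s * Real.Gamma ((n : ℝ) / 2 + s) / (Real.pi ^ ((n : ℝ) / 2) * |Real.Gamma (-s)|)

/-- `Q(Ω) = ℝ^{2n} \ (CΩ × CΩ)`. -/
def Qset (n : ℕ) (Ω : Set (En n)) : Set (En n × En n) := (Ωᶜ ×ˢ Ωᶜ)ᶜ

/-- The kernel `|x-y|^{n+2s}`. -/
def nsKer (n : ℕ) (s : ℝ) (x y : En n) : ℝ := dist x y ^ ((n : ℝ) + 2 * s)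

/-- The nonlocal normal derivative `N_s u (x) = c_{n,s} ∫_Ω (u x - u y)/|x-y|^{n+2s} dy`. -/
def NsD (n : ℕ) (s : ℝ) (Ω : Set (En n)) (u : En n → ℝ) (x : En n) : ℝ :=
  cns n s * ∫ y in Ω, (u x - u y) / nsKer n s x y

/-- The renormalized nonlocal normal derivative `Ñ_s u`. -/
def NsTilde (n : ℕ) (s : ℝ) (Ω : Set (En n)) (u : En n → ℝ) (x : En n) : ℝ :=
  NsD n s Ω u x / (cns n s * ∫ y in Ω, (nsKer n s x y)⁻¹)

/-- The fractional Laplacian `(-Δ)^s u (x)`, defined as a principal value. -/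
def fracLap (n : ℕ) (s : ℝ) (u : En n → ℝ) (x : En n) : ℝ :=
  cns n s * limUnder (𝓝[>] (0 : ℝ))
    (fun ε => ∫ y in {y : En n | ε ≤ dist x y}, (u x - u y) / nsKer n s x y)

/-- The Gagliardo-type bilinear form over `Q(Ω)`. -/
def gagliardo2 (n : ℕ) (s : ℝ) (Ω : Set (En n)) (u v : En n → ℝ) : ℝ :=
  ∫ p in Qset n Ω, (u p.1 - u p.2) * (v p.1 - v p.2) / nsKer n s p.1 p.2

/-- Membership in the space `H^s_{Ω,g}`. -/
def InHs (n : ℕ) (s : ℝ) (Ω : Set (En n)) (g : En n → ℝ) (u : En n → ℝ) : Prop :=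
  Measurable u ∧
  IntegrableOn (fun x => u x ^ 2) Ω ∧
  IntegrableOn (fun x => |g x| * u x ^ 2) Ωᶜ ∧
  IntegrableOn (fun p : En n × En n => (u p.1 - u p.2) ^ 2 / nsKer n s p.1 p.2) (Qset n Ω)

/-- The squared norm of `H^s_{Ω,g}`. -/
def hsNormSq (n : ℕ) (s : ℝ) (Ω : Set (En n)) (g : En n → ℝ) (u : En n → ℝ) : ℝ :=
  (∫ x in Ω, u x ^ 2) + (∫ x in Ωᶜ, |g x| * u x ^ 2) + gagliardo2 n s Ω u u

/-- The scalar product of `H^s_{Ω,g}`. -/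
def hsInner (n : ℕ) (s : ℝ) (Ω : Set (En n)) (g : En n → ℝ) (u v : En n → ℝ) : ℝ :=
  (∫ x in Ω, u x * v x) + (∫ x in Ωᶜ, |g x| * (u x * v x)) + gagliardo2 n s Ω u v

/-- `u` is a weak solution of `(-Δ)^s u = f` in `Ω`, `N_s u = g` in `ℝ^n \ Ω̄`. -/
def IsWeakSol (n : ℕ) (s : ℝ) (Ω : Set (En n)) (f g : En n → ℝ) (u : En n → ℝ) : Prop :=
  InHs n s Ω (fun _ => 0) u ∧
  ∀ v : En n → ℝ, InHs n s Ω g v →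
    cns n s / 2 * gagliardo2 n s Ω u v = (∫ x in Ω, f x * v x) + ∫ x in Ωᶜ, g x * v x

/-- Last coordinate of a point of `ℝ^n`. -/
def lastCoord {n : ℕ} (x : En n) : ℝ :=
  if h : 0 < n then x ⟨n - 1, Nat.sub_lt h Nat.one_pos⟩ else 0

/-- The first `n-1` coordinates of a point of `ℝ^n`. -/
def frontCoords {n : ℕ} (x : En n) : EuclideanSpace ℝ (Fin (n - 1)) :=
  (WithLp.equiv 2 (Fin (n - 1) → ℝ)).symm fun i => x (Fin.castLE (Nat.sub_le n 1) i)

/-- A bounded Lipschitz domain: open, bounded, nonempty, and near each boundary point the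
domain is (up to a rigid motion) the subgraph of a Lipschitz function. -/
def IsLipschitzDomain (n : ℕ) (Ω : Set (En n)) : Prop :=
  IsOpen Ω ∧ IsBounded Ω ∧ Ω.Nonempty ∧
  ∀ p ∈ frontier Ω, ∃ (φ : En n ≃ᵢ En n) (γ : EuclideanSpace ℝ (Fin (n - 1)) → ℝ)
    (L : ℝ≥0) (r : ℝ), 0 < r ∧ LipschitzWith L γ ∧ φ p = 0 ∧
    (φ '' Ω) ∩ Metric.ball 0 r = {x : En n | lastCoord x < γ (frontCoords x)} ∩ Metric.ball 0 r

/-- A bounded domain with `C¹` boundary. -/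
def IsC1Domain (n : ℕ) (Ω : Set (En n)) : Prop :=
  IsOpen Ω ∧ IsBounded Ω ∧ Ω.Nonempty ∧
  ∀ p ∈ frontier Ω, ∃ (φ : En n ≃ᵢ En n) (γ : EuclideanSpace ℝ (Fin (n - 1)) → ℝ)
    (r : ℝ), 0 < r ∧ ContDiff ℝ 1 γ ∧ φ p = 0 ∧
    (φ '' Ω) ∩ Metric.ball 0 r = {x : En n | lastCoord x < γ (frontCoords x)} ∩ Metric.ball 0 r

/-- The Laplacian `Δu = ∑ ∂²u/∂xᵢ²`. -/
def lapl {n : ℕ} (u : En n → ℝ) (x : En n) : ℝ :=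
  ∑ i : Fin n,
    fderiv ℝ (fun y => fderiv ℝ u y (EuclideanSpace.single i (1 : ℝ))) x
      (EuclideanSpace.single i (1 : ℝ))

/-- The surface measure `ω_{n-1}` of the unit sphere of `ℝ^n`. -/
def sphereSurf (n : ℕ) : ℝ := n * (volume (Metric.ball (0 : En n) 1)).toReal

/-- The unit vector `e_n`. -/
def eLast (n : ℕ) : En n :=
  if h : 0 < n then EuclideanSpace.single (⟨n - 1, Nat.sub_lt h Nat.one_pos⟩ : Fin n) (1 : ℝ)
  else 0

/-- The halfspace `Π = {x_n < 0}`. -/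
def halfSpaceNeg (n : ℕ) : Set (En n) := {x : En n | lastCoord x < 0}

end

/-- A `C¹` domain has an interior cone at each boundary point: at every small scale `t` there is
a ball of radius `c * t` inside `Ω` with centre at distance at most `t` from `p`. -/
lemma exists_interior_balls {n : ℕ} (hn : 0 < n) {Ω : Set (En n)} (hΩ : IsC1Domain n Ω)
    {p : En n} (hp : p ∈ frontier Ω) :
    ∃ c > 0, c ≤ 1 ∧ ∃ t₀ > 0, ∀ t, 0 < t → t < t₀ →
      ∃ q : En n, dist q p ≤ t ∧ Metric.ball q (c * t) ⊆ Ω := by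
  obtain ⟨hO, -, -, hloc⟩ := hΩ
  obtain ⟨φ, γ, r, hr, hγ, hφ, heq⟩ := hloc p hp
  have hlast : ∀ x : En n, lastCoord x = x ⟨n - 1, Nat.sub_lt hn Nat.one_pos⟩ := fun x => by
    simp [lastCoord, hn]
  have hlc : Continuous (lastCoord : En n → ℝ) := by
    rw [show (lastCoord : En n → ℝ) = fun x => x ⟨n - 1, Nat.sub_lt hn Nat.one_pos⟩ from
      funext hlast]
    fun_prop
  have hfc : Continuous (frontCoords : En n → EuclideanSpace ℝ (Fin (n - 1))) := by
    unfold frontCoords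
    refine (PiLp.continuous_toLp 2 _).comp ?_
    fun_prop
  have hl0 : lastCoord (0 : En n) = 0 := by simp [hlast]
  have hf0 : frontCoords (0 : En n) = 0 := by ext i; simp [frontCoords]
  have hiff : ∀ x : En n, x ∈ Metric.ball (0 : En n) r →
      (φ.symm x ∈ Ω ↔ lastCoord x < γ (frontCoords x)) := by
    intro x hx
    have h := Set.ext_iff.mp heq x
    simp only [Set.mem_inter_iff, hx, and_true, Set.mem_ofPred_eq] at h
    rw [← h]
    constructor
    · intro h'; exact ⟨_, h', by simp⟩
    · rintro ⟨y, hy, rfl⟩; simpa using hy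
  have hsymm0 : φ.symm 0 = p := by rw [← hφ]; simp
  -- the graph passes through the origin, since `p` is a boundary point
  have hγ0 : γ 0 = 0 := by
    apply le_antisymm
    · have hpn : p ∉ Ω := by
        have := hp.2
        rwa [hO.interior_eq] at this
      have h := (hiff 0 (Metric.mem_ball_self hr)).not
      rw [hsymm0, hl0, hf0] at h
      exact not_lt.mp (h.mp hpn)
    · by_contra hneg
      push Not at hneg
      have hopen : IsOpen {x : En n | γ (frontCoords x) < lastCoord x} :=
        isOpen_lt (hγ.continuous.comp hfc) hlc
      have hW : IsOpen (φ ⁻¹' ({x : En n | γ (frontCoords x) < lastCoord x} ∩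
          Metric.ball 0 r)) := (hopen.inter Metric.isOpen_ball).preimage φ.continuous
      obtain ⟨y, hy1, hy2⟩ := mem_closure_iff.mp hp.1 _ hW (by
        simp [hφ, hl0, hf0, hneg, hr, hsymm0])
      have := (hiff (φ y) hy1.2).mp (by simpa using hy2)
      exact lt_asymm this hy1.1
  obtain ⟨K, hK, hbig⟩ := ((hγ.differentiable one_ne_zero) 0).hasFDerivAt.isBigO_sub.exists_pos
  obtain ⟨δ, hδ, hball⟩ := Metric.eventually_nhds_iff.mp hbig.bound
  simp only [hγ0, sub_zero, dist_zero_right] at hball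
  set e : En n := EuclideanSpace.single ⟨n - 1, Nat.sub_lt hn Nat.one_pos⟩ (1 : ℝ) with he
  have hen : ‖e‖ = 1 := by simp [he]
  have hfe : ∀ (t : ℝ) (x : En n), frontCoords (x + t • e) = frontCoords x := by
    intro t x
    ext i
    have : (Fin.castLE (Nat.sub_le n 1) i) ≠ ⟨n - 1, Nat.sub_lt hn Nat.one_pos⟩ := by
      intro h; have := congrArg Fin.val h; simp at this; omega
    simp [frontCoords, he, this]
  have hfn : ∀ x : En n, ‖frontCoords x‖ ≤ ‖x‖ := by
    intro x
    rw [EuclideanSpace.norm_eq, EuclideanSpace.norm_eq]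
    apply Real.sqrt_le_sqrt
    have := Finset.sum_le_sum_of_subset_of_nonneg (f := fun j => ‖x j‖ ^ 2)
      (Finset.subset_univ (Finset.univ.map (Fin.castLEEmb (Nat.sub_le n 1))))
      (fun _ _ _ => by positivity)
    simpa [frontCoords] using this
  refine ⟨1 / (K + 2), by positivity, ?_, min (r / 2) δ, by positivity, ?_⟩
  · rw [div_le_one (by positivity)]; linarith
  intro t ht htm
  have ht1 : t < r / 2 := htm.trans_le (min_le_left _ _)
  have ht2 : t < δ := htm.trans_le (min_le_right _ _)
  have hct : 1 / (K + 2) * t ≤ t := by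
    have : 1 / (K + 2) ≤ 1 := by rw [div_le_one (by positivity)]; linarith
    nlinarith
  refine ⟨φ.symm (-(t • e)), ?_, ?_⟩
  · rw [← hsymm0, φ.symm.isometry.dist_eq]
    simp [norm_smul, hen, abs_of_pos ht]
  intro y hy
  set z : En n := φ y + t • e with hz
  have hzn : ‖z‖ < 1 / (K + 2) * t := by
    rw [Metric.mem_ball, ← φ.isometry.dist_eq, dist_eq_norm] at hy
    simpa [hz] using hy
  have hyz : φ y = z + (-t) • e := by simp [hz]
  have hyr : φ y ∈ Metric.ball (0 : En n) r := by
    rw [mem_ball_zero_iff, hyz]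
    calc ‖z + (-t) • e‖ ≤ ‖z‖ + ‖(-t) • e‖ := norm_add_le _ _
      _ = ‖z‖ + t := by rw [norm_smul, hen]; simp [abs_of_pos ht]
      _ < r := by linarith
  have key := (hiff (φ y) hyr).mpr ?_
  · simpa using key
  rw [hyz, hfe, hlast]
  have h1 : (z + (-t) • e) ⟨n - 1, Nat.sub_lt hn Nat.one_pos⟩
      = z ⟨n - 1, Nat.sub_lt hn Nat.one_pos⟩ - t := by simp [he, sub_eq_add_neg]
  rw [h1]
  have h2 : z ⟨n - 1, Nat.sub_lt hn Nat.one_pos⟩ ≤ ‖z‖ :=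
    (le_abs_self _).trans (PiLp.norm_apply_le z _)
  have h3 := hball (y := frontCoords z) (((hfn z).trans_lt hzn).trans_le hct |>.trans ht2)
  rw [Real.norm_eq_abs] at h3
  have h4 := neg_abs_le (γ (frontCoords z))
  have h5 : K * ‖frontCoords z‖ ≤ K * ‖z‖ := by gcongr; exact hfn z
  have h6 : (K + 2) * ‖z‖ < t := by
    have := mul_lt_mul_of_pos_left hzn (show 0 < K + 2 by positivity)
    rwa [← mul_assoc, mul_one_div_cancel (by positivity), one_mul] at this
  nlinarith [norm_nonneg z]

lemma nsKer_nonneg (n : ℕ) (s : ℝ) (x y : En n) : 0 ≤ nsKer n s x y :=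
  Real.rpow_nonneg dist_nonneg _

lemma nsKer_inv_le {n : ℕ} {s d : ℝ} (hs : 0 < s) (hd : 0 < d) {x y : En n} (h : d ≤ dist x y) :
    (nsKer n s x y)⁻¹ ≤ (d ^ ((n : ℝ) + 2 * s))⁻¹ :=
  inv_anti₀ (Real.rpow_pos_of_pos hd _) (Real.rpow_le_rpow hd.le h (by positivity))

/-- Away from `closure Ω` the kernel has no singularity on `Ω`, so the integrals defining the
nonlocal normal derivative converge. -/
lemma integrableOn_nsKer_inv {n : ℕ} {s : ℝ} (hs : 0 < s) {Ω : Set (En n)} (hO : IsOpen Ω)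
    (hB : IsBounded Ω) {x : En n} (hx : x ∉ closure Ω) :
    IntegrableOn (fun y => (nsKer n s x y)⁻¹) Ω := by
  obtain ⟨d, hd, hball⟩ := Metric.isOpen_iff.mp isClosed_closure.isOpen_compl x hx
  have hm : Measurable fun y => (nsKer n s x y)⁻¹ := by unfold nsKer; fun_prop
  refine Measure.integrableOn_of_bounded (M := (d ^ ((n : ℝ) + 2 * s))⁻¹) hB.measure_lt_top.ne
    hm.aestronglyMeasurable ?_
  refine (ae_restrict_mem hO.measurableSet).mono fun y hy => ?_
  rw [Real.norm_of_nonneg (inv_nonneg.mpr (nsKer_nonneg n s x y))]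
  refine nsKer_inv_le hs hd ?_
  by_contra hlt
  push Not at hlt
  exact hball (by rwa [Metric.mem_ball, dist_comm] : y ∈ Metric.ball x d) (subset_closure hy)

/-- The weight `∫_Ω |x - y|^{-n-2s} dy` blows up at the boundary: a ball of radius `c t` in `Ω`
at distance at most `t` from `p` contributes at least a constant times `t ^ (-2s)` as soon as
`|x - p| < t`. -/
lemma tendsto_weight_atTop {n : ℕ} (hn : 0 < n) {s : ℝ} (hs : 0 < s) {Ω : Set (En n)}
    (hΩ : IsC1Domain n Ω) {p : En n} (hp : p ∈ frontier Ω) {x : ℕ → En n}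
    (hx : ∀ k, x k ∉ closure Ω) (hlim : Tendsto x atTop (𝓝 p)) :
    Tendsto (fun k => ∫ y in Ω, (nsKer n s (x k) y)⁻¹) atTop atTop := by
  obtain ⟨c, hc, hc1, t₀, ht₀, H⟩ := exists_interior_balls hn hΩ hp
  obtain ⟨hO, hB, -, -⟩ := hΩ
  have : Nonempty (Fin n) := ⟨⟨0, hn⟩⟩
  set V : ℝ := volume.real (Metric.ball (0 : En n) 1) with hV
  have hVpos : 0 < V :=
    ENNReal.toReal_pos (Metric.measure_ball_pos volume _ one_pos).ne' measure_ball_lt_top.ne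
  set C : ℝ := (3 ^ ((n : ℝ) + 2 * s))⁻¹ * c ^ n * V with hC
  have hCpos : 0 < C := by positivity
  rw [tendsto_atTop]
  intro b
  have hpow : Tendsto (fun t : ℝ => C * t ^ (-(2 * s))) (𝓝[>] 0) atTop :=
    (tendsto_rpow_neg_nhdsGT_zero (by linarith)).const_mul_atTop hCpos
  obtain ⟨t, hbt, ht, htt⟩ : ∃ t : ℝ, b ≤ C * t ^ (-(2 * s)) ∧ 0 < t ∧ t < t₀ := by
    have h2 : ∀ᶠ t : ℝ in 𝓝[>] 0, t ∈ Ioo 0 t₀ := Ioo_mem_nhdsGT ht₀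
    obtain ⟨t, h, h'⟩ := ((tendsto_atTop.mp hpow b).and h2).exists
    exact ⟨t, h, h'.1, h'.2⟩
  obtain ⟨q, hq, hsub⟩ := H t ht htt
  filter_upwards [Metric.tendsto_nhds.mp hlim t ht] with k hk
  have hint := integrableOn_nsKer_inv hs hO hB (hx k)
  have hnn : ∀ y, 0 ≤ (nsKer n s (x k) y)⁻¹ := fun y => inv_nonneg.mpr (nsKer_nonneg n s _ y)
  have hvol : volume.real (Metric.ball q (c * t)) = (c * t) ^ n * V := by
    rw [hV, measureReal_def, Measure.addHaar_ball _ _ (by positivity), ENNReal.toReal_mul,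
      ENNReal.toReal_ofReal (by positivity), measureReal_def]
    simp
  have hct : c * t ≤ t := by nlinarith
  have hlow : ∀ y ∈ Metric.ball q (c * t),
      ((3 * t) ^ ((n : ℝ) + 2 * s))⁻¹ ≤ (nsKer n s (x k) y)⁻¹ := by
    intro y hy
    have hpos : 0 < dist (x k) y := by
      rw [dist_pos]
      rintro h
      exact hx k (h ▸ subset_closure (hsub hy))
    refine inv_anti₀ (Real.rpow_pos_of_pos hpos _)
      (Real.rpow_le_rpow dist_nonneg ?_ (by positivity))
    have h1 := dist_triangle4 (x k) p q y
    rw [dist_comm p q, dist_comm q y] at h1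
    have h2 := Metric.mem_ball.mp hy
    linarith
  calc b ≤ C * t ^ (-(2 * s)) := hbt
    _ = ((3 * t) ^ ((n : ℝ) + 2 * s))⁻¹ * volume.real (Metric.ball q (c * t)) := by
      rw [hvol, hC, Real.mul_rpow (by norm_num) ht.le, Real.rpow_add ht, Real.rpow_natCast,
        Real.rpow_neg ht.le, mul_pow]
      field_simp
    _ ≤ ∫ y in Metric.ball q (c * t), (nsKer n s (x k) y)⁻¹ :=
      setIntegral_ge_of_const_le_real measurableSet_ball measure_ball_lt_top.ne hlow
        (hint.mono_set hsub)
    _ ≤ ∫ y in Ω, (nsKer n s (x k) y)⁻¹ :=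
      setIntegral_mono_set hint (ae_of_all _ hnn) hsub.eventuallyLE

/-- The integral of `(u x - u y) / |x - y|^{n+2s}` is at most `ε` times the weight, up to an
additive constant independent of `x` near `p`: points `y` near `p` are handled by continuity of
`u`, and the kernel is bounded on the others. -/
lemma exists_numerator_bound {n : ℕ} {s : ℝ} (hs : 0 < s) {Ω : Set (En n)} (hO : IsOpen Ω)
    (hB : IsBounded Ω) {u : En n → ℝ} (hu : Continuous u) (p : En n) {ε : ℝ} (hε : 0 < ε) :
    ∃ B : ℝ, ∀ᶠ x in 𝓝 p, x ∉ closure Ω →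
      |∫ y in Ω, (u x - u y) / nsKer n s x y| ≤ ε * (∫ y in Ω, (nsKer n s x y)⁻¹) + B := by
  obtain ⟨δ, hδ, hδu⟩ := Metric.continuous_iff.mp hu p (ε / 2) (by positivity)
  obtain ⟨M, hM⟩ := hB.isCompact_closure.exists_bound_of_continuousOn hu.continuousOn
  set A : ℝ := |u p| + ε + |M| with hA
  set K : ℝ := ((δ / 2) ^ ((n : ℝ) + 2 * s))⁻¹ with hK
  have hK0 : 0 ≤ K := by positivity
  refine ⟨A * K * volume.real Ω, ?_⟩
  filter_upwards [Metric.ball_mem_nhds p (half_pos hδ)] with x hxp hx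
  have hxp' : dist x p < δ / 2 := hxp
  have hux := hδu x (by linarith)
  rw [Real.dist_eq] at hux
  have hint := integrableOn_nsKer_inv hs hO hB hx
  have hconst : IntegrableOn (fun _ : En n => A * K) Ω := integrableOn_const hB.measure_lt_top.ne
  have hpt : ∀ y ∈ Ω, ‖(u x - u y) / nsKer n s x y‖ ≤ ε * (nsKer n s x y)⁻¹ + A * K := by
    intro y hy
    have hnn : 0 ≤ (nsKer n s x y)⁻¹ := inv_nonneg.mpr (nsKer_nonneg n s x y)
    have hA0 : 0 ≤ A := by positivity
    rw [div_eq_mul_inv, norm_mul, Real.norm_of_nonneg hnn, Real.norm_eq_abs]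
    by_cases hy' : dist y p < δ
    · have huy := hδu y hy'
      rw [Real.dist_eq] at huy
      have : |u x - u y| ≤ ε := by
        rw [abs_le]; rw [abs_lt] at hux huy; constructor <;> linarith
      have h1 := mul_le_mul_of_nonneg_right this hnn
      have h2 : 0 ≤ A * K := by positivity
      linarith
    · push Not at hy'
      have hd : δ / 2 ≤ dist x y := by
        have := dist_triangle y x p
        rw [dist_comm y x] at this
        linarith
      have hk := nsKer_inv_le hs (half_pos hδ) hd
      have huy := hM y (subset_closure hy)
      rw [Real.norm_eq_abs] at huy
      have h3 : |u x - u y| ≤ A := by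
        have h4 := abs_sub (u x) (u y)
        have h5 := abs_sub_abs_le_abs_sub (u x) (u p)
        have h6 := le_abs_self M
        linarith
      have := mul_le_mul h3 hk hnn hA0
      have := mul_nonneg hε.le hnn
      linarith
  have h := norm_integral_le_of_norm_le ((hint.const_mul ε).add hconst)
    ((ae_restrict_mem hO.measurableSet).mono hpt)
  rw [Real.norm_eq_abs] at h
  refine h.trans_eq ?_
  simp only [Pi.add_apply]
  rw [integral_add (hint.const_mul ε) hconst, integral_const_mul, setIntegral_const, smul_eq_mul]
  ring

-- STATEMENT 17
theorem renormalized_neumann_boundary_limit (n : ℕ) (hn : 0 < n) (s : ℝ)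
    (hs : s ∈ Set.Ioo (0 : ℝ) 1) (Ω : Set (En n)) (hΩ : IsC1Domain n Ω)
    (u : En n → ℝ) (hu : Continuous u) :
    ∀ p ∈ frontier Ω, ∀ x : ℕ → En n, (∀ k, x k ∉ closure Ω) →
      Filter.Tendsto x Filter.atTop (𝓝 p) →
      Filter.Tendsto (fun k => NsTilde n s Ω u (x k)) Filter.atTop (𝓝 0) := by
  intro p hp x hx hlim
  -- if the constant vanished, the quotient would be the junk value `0 / 0 = 0`
  rcases eq_or_ne (cns n s) 0 with hc | hc
  · simp [NsTilde, NsD, hc]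
  simp only [NsTilde, NsD, mul_div_mul_left _ _ hc]
  have hD := tendsto_weight_atTop hn hs.1 hΩ hp hx hlim
  rw [Metric.tendsto_nhds]
  intro ε hε
  obtain ⟨B, hB⟩ := exists_numerator_bound hs.1 hΩ.1 hΩ.2.1 hu p (half_pos hε)
  filter_upwards [hlim.eventually hB, hD.eventually_gt_atTop 0,
    hD.eventually_gt_atTop (B / (ε / 2))] with k hk hpos hbig
  rw [Real.dist_eq, sub_zero, abs_div, abs_of_pos hpos, div_lt_iff₀ hpos]
  have h1 := hk (hx k)
  rw [div_lt_iff₀ (half_pos hε)] at hbig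
  linarith
end

section
/- Let s ∈ (1/2, 1) and α ∈ (0, 2s−1), and let Ω ⊂ ℝ^n be a bounded domain with C¹ boundary such that 0 ∈ ∂Ω with outward unit normal e_n at 0; that is, near 0 the set Ω coincides with {(x',x_n) : x_n < γ(x')} for a C¹ function γ with γ(0)=0 and ∇γ(0)=0, and the rescaled domains (1/ε)Ω converge to the halfspace Π := {x_n < 0} as ε → 0⁺. Then for every u ∈ C^{1,α}(ℝ^n), lim_{ε→0⁺} Ñ_s u(ε e_n)/ε = κ ∂_n u(0), where κ := (∫_Π (1−η_n)/|e_n−η|^{n+2s} dη)/(∫_Π |e_n−η|^{−n−2s} dη) is a finite positive constant depending only on n and s. -/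
/-!
Substituting `y = ε η` turns `Ñ_s u(ε e_n) / ε` into the quotient of
`∫_{Ω/ε} ((u(ε e_n) - u(ε η)) / ε) / |e_n - η|^{n+2s} dη` by
`∫_{Ω/ε} |e_n - η|^{-n-2s} dη` (`nsTilde_rescale`). Both integrals converge, by dominated
convergence (`tendsto_blowup`), to the corresponding integrals over the half-space `Π`:

* since the boundary graph is `o(|x'|)` at `0`, the sets `Ω/ε` converge pointwise to `Π` off the
  null set `η_n = 0` (`eventually_mem_iff`) and stay at distance at least `1/2` from the pole
  `e_n` for small `ε` (`eventually_far`);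
* `u` is Lipschitz, so the integrands are `O(|e_n - η|^{1-n-2s})`, which is integrable at infinity
  because `2s > 1` (`integrable_tailBound`).

The numerator tends to `∫_Π ∇u(0)·(e_n - η) / |e_n - η|^{n+2s} dη`. The reflection in the
`e_n`-axis preserves `Π`, the kernel and the measure, and averaging over it leaves only
`∂_n u(0) ∫_Π (1 - η_n) / |e_n - η|^{n+2s} dη` (`integral_linear_half`).
-/

open MeasureTheory Filter Set Bornology
open scoped Topology ENNReal NNReal Pointwise symmDiff

/-! ### Coordinates and the half-space -/

lemma lastCoord_eq {n : ℕ} (hn : 0 < n) (x : En n) :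
    lastCoord x = x ⟨n - 1, Nat.sub_lt hn Nat.one_pos⟩ := by
  simp [lastCoord, hn]

lemma lastCoord_eLast {n : ℕ} (hn : 0 < n) : lastCoord (eLast n) = 1 := by
  rw [lastCoord_eq hn]; simp [eLast, hn]

lemma norm_eLast {n : ℕ} (hn : 0 < n) : ‖eLast n‖ = 1 := by
  simp [eLast, hn]

lemma lastCoord_eq_inner {n : ℕ} (hn : 0 < n) (x : En n) :
    lastCoord x = inner ℝ (eLast n) x := by
  rw [lastCoord_eq hn]; simp [eLast, hn, EuclideanSpace.inner_single_left]

lemma continuous_lastCoord {n : ℕ} (hn : 0 < n) : Continuous (lastCoord : En n → ℝ) := by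
  have : (lastCoord : En n → ℝ) = fun x => inner ℝ (eLast n) x :=
    funext (lastCoord_eq_inner hn)
  rw [this]; fun_prop

lemma lastCoord_smul {n : ℕ} (hn : 0 < n) (c : ℝ) (x : En n) :
    lastCoord (c • x) = c * lastCoord x := by
  simp [lastCoord_eq hn]

lemma lastCoord_sub {n : ℕ} (hn : 0 < n) (x y : En n) :
    lastCoord (x - y) = lastCoord x - lastCoord y := by
  simp [lastCoord_eq hn]

lemma abs_lastCoord_le {n : ℕ} (hn : 0 < n) (x : En n) : |lastCoord x| ≤ ‖x‖ := by
  rw [lastCoord_eq hn]; exact PiLp.norm_apply_le x _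

lemma frontCoords_smul {n : ℕ} (c : ℝ) (x : En n) :
    frontCoords (c • x) = c • frontCoords x := by
  ext i; simp [frontCoords]

lemma norm_frontCoords_le {n : ℕ} (x : En n) : ‖frontCoords x‖ ≤ ‖x‖ := by
  rw [EuclideanSpace.norm_eq, EuclideanSpace.norm_eq]
  apply Real.sqrt_le_sqrt
  have := Finset.sum_le_sum_of_subset_of_nonneg (s := Finset.univ.map
    (Fin.castLEEmb (Nat.sub_le n 1))) (t := Finset.univ) (f := fun i => ‖x i‖ ^ 2)
    (Finset.subset_univ _) (fun _ _ _ => sq_nonneg _)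
  simpa [frontCoords] using this

lemma ae_lastCoord_ne_zero {n : ℕ} (hn : 0 < n) :
    ∀ᵐ x : En n, lastCoord x ≠ 0 := by
  have h := Measure.addHaar_submodule (volume : Measure (En n))
    (LinearMap.ker (innerSL ℝ (eLast n)).toLinearMap) (by
      intro h
      have : eLast n ∈ LinearMap.ker (innerSL ℝ (eLast n)).toLinearMap := by rw [h]; trivial
      simp [norm_eLast hn] at this)
  rw [ae_iff]
  convert h using 2
  ext x
  simp [lastCoord_eq_inner hn]

lemma isOpen_halfSpaceNeg {n : ℕ} (hn : 0 < n) : IsOpen (halfSpaceNeg n) :=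
  isOpen_lt (continuous_lastCoord hn) continuous_const

lemma one_le_dist {n : ℕ} (hn : 0 < n) {η : En n} (h : η ∈ halfSpaceNeg n) :
    1 ≤ dist (eLast n) η := by
  have h1 := abs_lastCoord_le hn (eLast n - η)
  rw [lastCoord_sub hn, lastCoord_eLast hn] at h1
  have h2 : lastCoord η < 0 := h
  rw [dist_eq_norm]
  linarith [le_abs_self (1 - lastCoord η)]

/-! ### Kernel bounds and integrability -/

/-- The tail function `3^{n+2s-1} (1 + |e_n - η|)^{-(n+2s-1)}`, where the factor `3^{n+2s-1}` makes
it dominate `|e_n - η|^{1-n-2s}` for `|e_n - η| ≥ 1/2`; its integrability is where `s > 1/2`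
enters. -/
noncomputable def tailBound (n : ℕ) (s : ℝ) (η : En n) : ℝ :=
  (3 : ℝ) ^ ((n : ℝ) + 2 * s - 1) * (1 + ‖eLast n - η‖) ^ (-((n : ℝ) + 2 * s - 1))

lemma integrable_tailBound (n : ℕ) {s : ℝ} (hs : 1 / 2 < s) :
    Integrable (tailBound n s) := by
  have h := integrable_one_add_norm (E := En n) (μ := volume) (r := (n : ℝ) + 2 * s - 1)
    (by simp; linarith)
  exact (h.comp_sub_left (eLast n)).const_mul _

lemma div_nsKer_le_tailBound {n : ℕ} {s : ℝ} (hs : 1 / 2 < s) {η : En n}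
    (h : 1 / 2 ≤ dist (eLast n) η) :
    dist (eLast n) η / nsKer n s (eLast n) η ≤ tailBound n s η := by
  unfold nsKer tailBound
  rw [← dist_eq_norm]
  set d := dist (eLast n) η
  have hd : 0 < d := by linarith
  set p := (n : ℝ) + 2 * s - 1 with hp
  have hp0 : 0 ≤ p := by have : (0 : ℝ) ≤ n := by positivity
                         linarith
  have e1 : (n : ℝ) + 2 * s = p + 1 := by rw [hp]; ring
  rw [e1, Real.rpow_add hd, Real.rpow_one, Real.rpow_neg (by linarith)]
  have h3 : (1 + d) ^ p ≤ 3 ^ p * d ^ p := by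
    rw [← Real.mul_rpow (by norm_num) hd.le]
    exact Real.rpow_le_rpow (by linarith) (by linarith) hp0
  have h4 : 0 < d ^ p := by positivity
  have h5 : 0 < (1 + d) ^ p := by positivity
  rw [div_le_iff₀ (by positivity)]
  have h6 : 1 ≤ 3 ^ p * ((1 + d) ^ p)⁻¹ * d ^ p := by
    rw [mul_right_comm, ← div_eq_mul_inv, le_div_iff₀ h5]; linarith
  nlinarith

lemma nsKer_pos {n : ℕ} {s : ℝ} {x y : En n} (h : 0 < dist x y) : 0 < nsKer n s x y :=
  Real.rpow_pos_of_pos h _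

lemma measurable_nsKer (n : ℕ) (s : ℝ) (x : En n) : Measurable (nsKer n s x) := by
  unfold nsKer
  fun_prop

lemma nsKer_smul {n : ℕ} {s ε : ℝ} (hε : 0 < ε) (x y : En n) :
    nsKer n s (ε • x) (ε • y) = ε ^ ((n : ℝ) + 2 * s) * nsKer n s x y := by
  unfold nsKer
  rw [dist_smul₀, Real.mul_rpow (norm_nonneg _) dist_nonneg, Real.norm_of_nonneg hε.le]

/-- A kernel integrand of at most linear growth is integrable over the half-space. -/
lemma integrableOn_half {n : ℕ} (hn : 0 < n) {s : ℝ} (hs : 1 / 2 < s) {ψ : En n → ℝ}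
    (hψ : Measurable ψ) {C : ℝ}
    (hb : ∀ η, 1 / 2 ≤ dist (eLast n) η → |ψ η| ≤ C * dist (eLast n) η) :
    IntegrableOn (fun η => ψ η / nsKer n s (eLast n) η) (halfSpaceNeg n) := by
  refine Integrable.mono' ((integrable_tailBound n hs).const_mul |C|).integrableOn
    (hψ.div (measurable_nsKer n s _)).aestronglyMeasurable ?_
  refine (ae_restrict_iff' (isOpen_halfSpaceNeg hn).measurableSet).2 (ae_of_all _ ?_)
  intro η hη
  have hd := one_le_dist hn hη
  have hk := nsKer_pos (s := s) (by linarith : 0 < dist (eLast n) η)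
  rw [Real.norm_eq_abs, abs_div, abs_of_pos hk]
  calc |ψ η| / nsKer n s (eLast n) η ≤ (|C| * dist (eLast n) η) / nsKer n s (eLast n) η := by
        gcongr
        exact (hb η (by linarith)).trans (by gcongr; exact le_abs_self C)
    _ = |C| * (dist (eLast n) η / nsKer n s (eLast n) η) := by ring
    _ ≤ _ := by
        gcongr
        exact div_nsKer_le_tailBound hs (by linarith)

lemma setIntegral_half_pos {n : ℕ} (hn : 0 < n) {f : En n → ℝ}
    (hf : IntegrableOn f (halfSpaceNeg n)) (hpos : ∀ η ∈ halfSpaceNeg n, 0 < f η) :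
    0 < ∫ η in halfSpaceNeg n, f η := by
  have hm := (isOpen_halfSpaceNeg hn).measurableSet
  rw [setIntegral_pos_iff_support_of_nonneg_ae
    ((ae_restrict_iff' hm).2 (ae_of_all _ fun η hη => (hpos η hη).le)) hf]
  have : Function.support f ∩ halfSpaceNeg n = halfSpaceNeg n :=
    inter_eq_right.2 fun η hη => (hpos η hη).ne'
  rw [this]
  refine (isOpen_halfSpaceNeg hn).measure_pos _ ⟨(-1 : ℝ) • eLast n, ?_⟩
  show lastCoord _ < 0
  rw [lastCoord_smul hn, lastCoord_eLast hn]; norm_num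

/-! ### Blow-up of the domain at the boundary point -/

/-- The local geometry at `0` used by the blow-up: `Ω` is squeezed between the cones
`x_n < -c|x|` and `x_n < c|x|` near `0`, for every `c > 0`. -/
lemma cone_of_graph {n : ℕ} {Ω : Set (En n)}
    (hgraph : ∃ (r : ℝ) (γ : EuclideanSpace ℝ (Fin (n - 1)) → ℝ), 0 < r ∧ ContDiff ℝ 1 γ ∧
      γ 0 = 0 ∧ fderiv ℝ γ 0 = 0 ∧
      Ω ∩ Metric.ball 0 r = {x : En n | lastCoord x < γ (frontCoords x)} ∩ Metric.ball 0 r)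
    {c : ℝ} (hc : 0 < c) :
    ∃ δ > 0, ∀ x : En n, ‖x‖ < δ →
      (x ∈ Ω → lastCoord x < c * ‖x‖) ∧ (lastCoord x < -(c * ‖x‖) → x ∈ Ω) := by
  obtain ⟨r, γ, hr, hγ, hγ0, hγ', hΩ⟩ := hgraph
  have h1 := ((hγ.differentiable (by norm_num)) 0).hasFDerivAt.isLittleO
  have h2 := h1.def hc
  obtain ⟨δ, hδ, hball⟩ := Metric.eventually_nhds_iff.1 h2
  refine ⟨min δ r, lt_min hδ hr, fun x hx => ?_⟩
  have hxr : x ∈ Metric.ball (0 : En n) r := by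
    simpa using hx.trans_le (min_le_right _ _)
  have hf := norm_frontCoords_le x
  have h3 := hball (y := frontCoords x) (by
    simpa using hf.trans_lt (hx.trans_le (min_le_left _ _)))
  simp only [hγ0, hγ', sub_zero, zero_apply] at h3
  rw [Real.norm_eq_abs] at h3
  have h4 : |γ (frontCoords x)| ≤ c * ‖x‖ := h3.trans (by gcongr)
  have h5 := abs_le.1 h4
  have h6 : x ∈ Ω ↔ lastCoord x < γ (frontCoords x) := by
    have := Set.ext_iff.1 hΩ x
    simpa [hxr] using this
  rw [h6]
  exact ⟨fun h => by linarith, fun h => by linarith⟩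

/-- For small `ε`, the rescaled domain `Ω / ε` keeps a fixed distance from the pole `e_n`. -/
lemma eventually_far {n : ℕ} (hn : 0 < n) {Ω : Set (En n)}
    (hcone : ∀ c : ℝ, 0 < c → ∃ δ > 0, ∀ x : En n, ‖x‖ < δ →
      (x ∈ Ω → lastCoord x < c * ‖x‖) ∧ (lastCoord x < -(c * ‖x‖) → x ∈ Ω)) :
    ∀ᶠ ε : ℝ in 𝓝[>] 0, ∀ η : En n, ε • η ∈ Ω → 1 / 2 ≤ dist (eLast n) η := by
  obtain ⟨δ, hδ, h⟩ := hcone (1 / 4) (by norm_num)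
  have h1 : ∀ᶠ ε : ℝ in 𝓝[>] 0, ε < δ / 2 :=
    mem_nhdsWithin_of_mem_nhds (Iio_mem_nhds (by positivity))
  filter_upwards [h1, self_mem_nhdsWithin] with ε hε hε0 η hη
  have hε0 : 0 < ε := hε0
  by_contra! hd
  rw [dist_eq_norm] at hd
  have h2 := abs_lastCoord_le hn (eLast n - η)
  rw [lastCoord_sub hn, lastCoord_eLast hn] at h2
  have h3 := (le_abs_self _).trans h2
  have h4 : ‖η‖ ≤ 3 / 2 := by
    have := norm_sub_norm_le η (eLast n)
    rw [norm_eLast hn, norm_sub_rev] at this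
    linarith
  have h5 : ‖ε • η‖ = ε * ‖η‖ := by rw [norm_smul, Real.norm_of_nonneg hε0.le]
  have h6 := (h (ε • η) (by rw [h5]; nlinarith)).1 hη
  rw [h5, lastCoord_smul hn] at h6
  have h7 : lastCoord η < 1 / 4 * ‖η‖ := by
    by_contra! h8
    nlinarith
  linarith

/-- Off the hyperplane `η_n = 0`, the rescaled domains converge pointwise to the half-space. -/
lemma eventually_mem_iff {n : ℕ} (hn : 0 < n) {Ω : Set (En n)}
    (hcone : ∀ c : ℝ, 0 < c → ∃ δ > 0, ∀ x : En n, ‖x‖ < δ →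
      (x ∈ Ω → lastCoord x < c * ‖x‖) ∧ (lastCoord x < -(c * ‖x‖) → x ∈ Ω))
    {η : En n} (hη : lastCoord η ≠ 0) :
    ∀ᶠ ε : ℝ in 𝓝[>] 0, (ε • η ∈ Ω ↔ η ∈ halfSpaceNeg n) := by
  have hl : 0 < |lastCoord η| := abs_pos.2 hη
  have hN : 0 < ‖η‖ := hl.trans_le (abs_lastCoord_le hn η)
  obtain ⟨δ, hδ, h⟩ := hcone (|lastCoord η| / (2 * ‖η‖)) (by positivity)
  have h1 : ∀ᶠ ε : ℝ in 𝓝[>] 0, ε < δ / ‖η‖ :=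
    mem_nhdsWithin_of_mem_nhds (Iio_mem_nhds (by positivity))
  filter_upwards [h1, self_mem_nhdsWithin] with ε hε hε0
  have hε0 : 0 < ε := hε0
  have h5 : ‖ε • η‖ = ε * ‖η‖ := by rw [norm_smul, Real.norm_of_nonneg hε0.le]
  have h6 := h (ε • η) (by rw [h5]; exact (lt_div_iff₀ hN).1 hε)
  have h7 : |lastCoord η| / (2 * ‖η‖) * ‖ε • η‖ = ε * (|lastCoord η| / 2) := by
    rw [h5]; field_simp
  rw [h7, lastCoord_smul hn] at h6
  show _ ↔ lastCoord η < 0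
  constructor
  · intro hm
    have h8 := lt_of_mul_lt_mul_left (h6.1 hm) hε0.le
    by_contra! h9
    rw [abs_of_nonneg h9] at h8 hl
    linarith
  · intro hneg
    apply h6.2
    rw [abs_of_neg hneg]
    nlinarith

/-! ### Limits and symmetry of kernel integrals -/

/-- Blow-up limit: kernel integrals over `Ω / ε` of functions with a uniform linear bound
converge to the kernel integral of the limit over the half-space. -/
lemma tendsto_blowup {n : ℕ} (hn : 0 < n) {s : ℝ} (hs : 1 / 2 < s) {Ω : Set (En n)}
    (hΩ : IsOpen Ω)
    (hcone : ∀ c : ℝ, 0 < c → ∃ δ > 0, ∀ x : En n, ‖x‖ < δ →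
      (x ∈ Ω → lastCoord x < c * ‖x‖) ∧ (lastCoord x < -(c * ‖x‖) → x ∈ Ω))
    (φ : ℝ → En n → ℝ) (ψ : En n → ℝ) (hφ : ∀ ε, Measurable (φ ε)) {C : ℝ} (hC : 0 ≤ C)
    (hb : ∀ ε > 0, ∀ η, 1 / 2 ≤ dist (eLast n) η → |φ ε η| ≤ C * dist (eLast n) η)
    (hlim : ∀ η, Tendsto (fun ε => φ ε η) (𝓝[>] 0) (𝓝 (ψ η))) :
    Tendsto (fun ε : ℝ => ∫ η, ((fun η => ε • η) ⁻¹' Ω).indicator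
      (fun η => φ ε η / nsKer n s (eLast n) η) η) (𝓝[>] 0)
      (𝓝 (∫ η in halfSpaceNeg n, ψ η / nsKer n s (eLast n) η)) := by
  rw [← integral_indicator (isOpen_halfSpaceNeg hn).measurableSet]
  refine tendsto_integral_filter_of_dominated_convergence (fun η => C * tailBound n s η)
    (.of_forall fun ε => ?_) ?_ ((integrable_tailBound n hs).const_mul C) ?_
  · exact (((hφ ε).div (measurable_nsKer n s _)).indicator
      (hΩ.preimage (by fun_prop)).measurableSet).aestronglyMeasurable
  · filter_upwards [eventually_far hn hcone, self_mem_nhdsWithin] with ε hfar hε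
    refine ae_of_all _ fun η => ?_
    by_cases hη : ε • η ∈ Ω
    · have hd := hfar η hη
      have hk := nsKer_pos (s := s) (by linarith : 0 < dist (eLast n) η)
      rw [indicator_of_mem (by exact hη), Real.norm_eq_abs, abs_div, abs_of_pos hk]
      calc |φ ε η| / nsKer n s (eLast n) η
          ≤ (C * dist (eLast n) η) / nsKer n s (eLast n) η := by
            gcongr
            exact hb ε hε η hd
        _ = C * (dist (eLast n) η / nsKer n s (eLast n) η) := by ring
        _ ≤ _ := by
            gcongr
            exact div_nsKer_le_tailBound hs hd
    · rw [indicator_of_notMem (by exact hη), norm_zero]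
      unfold tailBound
      positivity
  · filter_upwards [ae_lastCoord_ne_zero hn] with η hη
    have hev := eventually_mem_iff hn hcone hη
    by_cases hP : η ∈ halfSpaceNeg n
    · rw [indicator_of_mem hP]
      refine ((hlim η).div_const _).congr' ?_
      filter_upwards [hev] with ε hε
      rw [indicator_of_mem (by exact hε.2 hP)]
    · rw [indicator_of_notMem hP]
      refine tendsto_const_nhds.congr' ?_
      filter_upwards [hev] with ε hε
      rw [indicator_of_notMem (by exact fun h => hP (hε.1 h))]

/-- Reflecting in the `e_n`-axis kills the tangential part of `D` in the kernel integral over the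
half-space. -/
lemma integral_linear_half {n : ℕ} (hn : 0 < n) {s : ℝ} (hs : 1 / 2 < s)
    (D : En n →L[ℝ] ℝ) :
    ∫ η in halfSpaceNeg n, D (eLast n - η) / nsKer n s (eLast n) η =
      (∫ η in halfSpaceNeg n, (1 - lastCoord η) / nsKer n s (eLast n) η) * D (eLast n) := by
  set e := eLast n with he
  set R := Submodule.reflection (ℝ ∙ e) with hR
  have hne : ‖e‖ = 1 := norm_eLast hn
  have hRx : ∀ x, R x = (2 * lastCoord x) • e - x := by
    intro x
    rw [hR, Submodule.reflection_apply, Submodule.starProjection_unit_singleton ℝ hne,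
      ← lastCoord_eq_inner hn, two_smul, ← add_smul, two_mul]
  have hRe : R e = e := by
    rw [hRx, lastCoord_eLast hn, mul_one, two_smul]; abel
  have hlast : ∀ x, lastCoord (R x) = lastCoord x := by
    intro x
    rw [hRx, lastCoord_sub hn, lastCoord_smul hn, lastCoord_eLast hn]; ring
  have hpre : R ⁻¹' (halfSpaceNeg n) = halfSpaceNeg n := by
    ext x; simp [halfSpaceNeg, hlast]
  have hker : ∀ x, nsKer n s e (R x) = nsKer n s e x := by
    intro x
    unfold nsKer
    congr 1
    conv_lhs => rw [← hRe]
    exact R.dist_map _ _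
  have hsym : ∫ η in halfSpaceNeg n, D (e - R η) / nsKer n s e η =
      ∫ η in halfSpaceNeg n, D (e - η) / nsKer n s e η := by
    have := R.measurePreserving.setIntegral_preimage_emb R.toMeasurableEquiv.measurableEmbedding
      (fun η => D (e - η) / nsKer n s e η) (halfSpaceNeg n)
    rw [hpre] at this
    simpa only [hker] using this
  have hD : ∀ η, |D (e - η)| ≤ ‖D‖ * dist e η := by
    intro η
    rw [dist_eq_norm]
    exact D.le_opNorm _
  have hi1 := integrableOn_half hn hs (ψ := fun η => D (e - η)) (by fun_prop)
    (C := ‖D‖) (fun η _ => hD η)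
  have hi2 := integrableOn_half hn hs (ψ := fun η => D (e - R η)) (by fun_prop)
    (C := ‖D‖) (fun η _ => by
      refine (hD (R η)).trans_eq ?_
      congr 1
      conv_lhs => rw [← hRe]
      exact R.dist_map _ _)
  have hadd : ∫ η in halfSpaceNeg n,
      (D (e - η) / nsKer n s e η + D (e - R η) / nsKer n s e η) =
      (∫ η in halfSpaceNeg n, D (e - η) / nsKer n s e η) +
      ∫ η in halfSpaceNeg n, D (e - R η) / nsKer n s e η := integral_add hi1 hi2
  rw [hsym] at hadd
  have hpt : ∀ η, D (e - η) / nsKer n s e η + D (e - R η) / nsKer n s e η =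
      (1 - lastCoord η) / nsKer n s e η * (2 * D e) := by
    intro η
    rw [← add_div, ← map_add, hRx]
    have : e - η + (e - ((2 * lastCoord η) • e - η)) = (2 * (1 - lastCoord η)) • e := by
      module
    rw [this, map_smul, smul_eq_mul]; ring
  simp only [hpt] at hadd
  rw [integral_mul_const] at hadd
  linarith

/-! ### Rescaling -/

lemma cns_ne_zero (n : ℕ) {s : ℝ} (hs : 1 / 2 < s ∧ s < 1) : cns n s ≠ 0 := by
  unfold cns
  have h1 : Real.Gamma ((n : ℝ) / 2 + s) ≠ 0 :=
    (Real.Gamma_pos_of_pos (by have := hs.1; positivity)).ne'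
  have h2 : Real.Gamma (-s) ≠ 0 := by
    apply Real.Gamma_ne_zero
    intro m hm
    have hm' : s = m := by linarith
    rw [hm'] at hs
    have h3 : m < 1 := by exact_mod_cast hs.2
    interval_cases m
    norm_num at hs
  positivity

/-- Scaling `y = ε η` turns the renormalized derivative at `ε e_n` into a quotient of kernel
integrals over `Ω / ε`. -/
lemma nsTilde_rescale {n : ℕ} {s : ℝ} (hs : 1 / 2 < s ∧ s < 1) {Ω : Set (En n)}
    (hΩ : IsOpen Ω) (u : En n → ℝ) {ε : ℝ} (hε : 0 < ε) :
    NsTilde n s Ω u (ε • eLast n) / ε =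
      (∫ η, ((fun η => ε • η) ⁻¹' Ω).indicator
        (fun η => ((u (ε • eLast n) - u (ε • η)) / ε) / nsKer n s (eLast n) η) η) /
      (∫ η, ((fun η => ε • η) ⁻¹' Ω).indicator
        (fun η => 1 / nsKer n s (eLast n) η) η) := by
  have key : ∀ g : En n → ℝ, ∫ y in Ω, g y / nsKer n s (ε • eLast n) y =
      (ε ^ n * (ε ^ ((n : ℝ) + 2 * s))⁻¹) * ∫ η, ((fun η => ε • η) ⁻¹' Ω).indicator
        (fun η => g (ε • η) / nsKer n s (eLast n) η) η := by
    intro g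
    rw [← integral_indicator hΩ.measurableSet]
    have h := Measure.integral_comp_smul (volume : Measure (En n))
      (Ω.indicator fun y => g y / nsKer n s (ε • eLast n) y) ε
    simp only [finrank_euclideanSpace, Fintype.card_fin, smul_eq_mul] at h
    rw [abs_of_pos (by positivity)] at h
    have h2 : ∀ η, Ω.indicator (fun y => g y / nsKer n s (ε • eLast n) y) (ε • η) =
        (ε ^ ((n : ℝ) + 2 * s))⁻¹ * ((fun η => ε • η) ⁻¹' Ω).indicator
        (fun η => g (ε • η) / nsKer n s (eLast n) η) η := by
      intro η
      by_cases hη : ε • η ∈ Ω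
      · rw [indicator_of_mem hη, indicator_of_mem (by exact hη), nsKer_smul hε,
          div_mul_eq_div_div_swap, div_eq_mul_inv, mul_comm]
      · rw [indicator_of_notMem hη, indicator_of_notMem (by exact hη), mul_zero]
    simp only [h2] at h
    rw [integral_const_mul] at h
    rw [mul_assoc, h]
    field_simp
  unfold NsTilde NsD
  rw [mul_div_mul_left _ _ (cns_ne_zero n hs)]
  have hden := key (fun _ => 1)
  simp only [one_div] at hden ⊢
  rw [key (fun y => u (ε • eLast n) - u y), hden, mul_div_mul_left _ _ (by positivity)]
  rw [div_right_comm, ← integral_div]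
  congr 2
  ext η
  by_cases hη : ε • η ∈ Ω
  · rw [indicator_of_mem (by exact hη), indicator_of_mem (by exact hη), div_right_comm]
  · rw [indicator_of_notMem (by exact hη), indicator_of_notMem (by exact hη), zero_div]

-- STATEMENT 18
theorem renormalized_neumann_normal_derivative (n : ℕ) (hn : 0 < n) (s α : ℝ)
    (hs : 1 / 2 < s ∧ s < 1) (hα : 0 < α ∧ α < 2 * s - 1)
    (Ω : Set (En n)) (hΩ : IsC1Domain n Ω)
    (h0 : (0 : En n) ∈ frontier Ω)
    (hgraph : ∃ (r : ℝ) (γ : EuclideanSpace ℝ (Fin (n - 1)) → ℝ), 0 < r ∧ ContDiff ℝ 1 γ ∧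
      γ 0 = 0 ∧ fderiv ℝ γ 0 = 0 ∧
      Ω ∩ Metric.ball 0 r = {x : En n | lastCoord x < γ (frontCoords x)} ∩ Metric.ball 0 r)
    (hconv : ∀ R : ℝ, 0 < R → Filter.Tendsto
      (fun ε : ℝ => volume (((ε⁻¹ • Ω) ∆ halfSpaceNeg n) ∩ Metric.ball (0 : En n) R))
      (𝓝[>] (0 : ℝ)) (𝓝 0))
    (u : En n → ℝ) (hu : ContDiff ℝ 1 u)
    (huH : ∃ C : ℝ≥0, HolderWith C α.toNNReal fun x => fderiv ℝ u x)
    (hub : ∃ M : ℝ, ∀ x, ‖fderiv ℝ u x‖ ≤ M) :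
    0 < (∫ η in halfSpaceNeg n, (1 - lastCoord η) / nsKer n s (eLast n) η) /
        (∫ η in halfSpaceNeg n, (nsKer n s (eLast n) η)⁻¹) ∧
    Filter.Tendsto (fun ε : ℝ => NsTilde n s Ω u (ε • eLast n) / ε) (𝓝[>] (0 : ℝ))
      (𝓝 (((∫ η in halfSpaceNeg n, (1 - lastCoord η) / nsKer n s (eLast n) η) /
        (∫ η in halfSpaceNeg n, (nsKer n s (eLast n) η)⁻¹)) * fderiv ℝ u 0 (eLast n))) := by
  have hcone := fun c hc => cone_of_graph hgraph (c := c) hc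
  have hd0 := fun η (hη : η ∈ halfSpaceNeg n) => one_le_dist hn hη
  have hlin := fun η : En n => abs_lastCoord_le hn (eLast n - η)
  simp only [lastCoord_sub hn, lastCoord_eLast hn] at hlin
  have hmeas := (continuous_lastCoord hn).measurable
  have hnum : 0 < ∫ η in halfSpaceNeg n, (1 - lastCoord η) / nsKer n s (eLast n) η := by
    refine setIntegral_half_pos hn (integrableOn_half hn hs.1 (by fun_prop) (C := 1)
      fun η _ => by rw [one_mul, dist_eq_norm]; exact hlin η) fun η hη => ?_
    have h1 : lastCoord η < 0 := hη
    exact div_pos (by linarith) (nsKer_pos (by linarith [hd0 η hη]))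
  have hden : 0 < ∫ η in halfSpaceNeg n, (nsKer n s (eLast n) η)⁻¹ := by
    simp only [← one_div]
    refine setIntegral_half_pos hn (integrableOn_half hn hs.1 measurable_const (C := 2)
      fun η h => by rw [abs_one]; linarith) fun η hη => ?_
    exact div_pos one_pos (nsKer_pos (by linarith [hd0 η hη]))
  refine ⟨div_pos hnum hden, ?_⟩
  obtain ⟨M, hM⟩ := hub
  have hM0 : 0 ≤ M := (norm_nonneg _).trans (hM 0)
  have hdiff : Differentiable ℝ u := hu.differentiable (by norm_num)
  have hucont := hu.continuous
  have hLip : ∀ x y, |u x - u y| ≤ M * ‖x - y‖ := fun x y =>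
    convex_univ.norm_image_sub_le_of_norm_fderiv_le (𝕜 := ℝ) (fun z _ => hdiff z)
      (fun z _ => hM z) (mem_univ y) (mem_univ x)
  have hline : ∀ v : En n, Tendsto (fun ε : ℝ => (u (ε • v) - u 0) / ε) (𝓝[>] 0)
      (𝓝 (fderiv ℝ u 0 v)) := by
    intro v
    have h1 := ((hdiff 0).hasFDerivAt.hasLineDerivAt v).tendsto_slope_zero_right
    refine h1.congr fun ε => ?_
    simp [div_eq_inv_mul]
  have hN := tendsto_blowup hn hs.1 hΩ.1 hcone
    (fun ε η => (u (ε • eLast n) - u (ε • η)) / ε)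
    (fun η => fderiv ℝ u 0 (eLast n - η)) (fun ε => by fun_prop) hM0
    (by
      intro ε hε η _
      rw [abs_div, abs_of_pos hε, div_le_iff₀ hε]
      refine (hLip _ _).trans_eq ?_
      rw [← smul_sub, norm_smul, Real.norm_of_nonneg hε.le, dist_eq_norm]; ring)
    (by
      intro η
      rw [map_sub]
      refine ((hline (eLast n)).sub (hline η)).congr fun ε => ?_
      ring)
  have hD := tendsto_blowup hn hs.1 hΩ.1 hcone (fun _ _ => 1) (fun _ => 1)
    (fun _ => measurable_const) (C := 2) (by norm_num)
    (fun ε _ η h => by rw [abs_one]; linarith) (fun _ => tendsto_const_nhds)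
  rw [integral_linear_half hn hs.1] at hN
  simp only [one_div (nsKer _ _ _ _)] at hD
  rw [div_mul_eq_mul_div]
  refine (hN.div hD hden.ne').congr' ?_
  filter_upwards [self_mem_nhdsWithin] with ε hε
  simp only [nsTilde_rescale hs hΩ.1 u hε, one_div, Pi.div_apply]
end
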